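/- Let v ≥ 3 and let G be a connected simple graph on v vertices with exactly v edges. Then for every real y ≥ 0, det( L(G) + vy·I ) ≤ det( L(C_v) + vy·I ), where C_v is the cycle graph on v vertices and L(·) denotes the Laplacian matrix. -/

import Mathlib

/-!
For `x > 0`, adding an edge `uw` to a graph is a rank-one perturbation of `L + x I`, so the
determinant grows by `a u u + a w w - 2 * a u w`, where `a` is the adjugate. A connected graph with
as many edges as vertices is a tree plus one edge, and the cycle is a path plus the edge between
its ends. Hence it suffices that, among trees on `n` vertices, the determinant and the principal
cofactors are at most those of the path at one of its ends, and that all cofactors are at least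
`1`, which is the cofactor of the path at its two ends. These bounds follow by induction, deleting
an edge at the root of the tree; the inequality behind the induction step is
`r a * r b ≤ r (a + b - 1)` for the principal cofactor `r n` at an end of the path on `n` vertices.
-/

open Matrix SimpleGraph

universe u

section Matrix

variable {m n R : Type*} [Fintype m] [DecidableEq m] [Fintype n] [DecidableEq n] [CommRing R]

theorem adjugate_eq_of_mul_eq_det_smul_one {A B : Matrix n n R} (hA : IsUnit A.det)
    (h : A * B = A.det • 1) : A.adjugate = B :=
  ((isUnit_iff_isUnit_det A).2 hA).mul_left_cancel <| by rw [mul_adjugate, h]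

theorem adjugate_fromBlocks_zero_zero {A : Matrix m m R} {B : Matrix n n R}
    (hA : IsUnit A.det) (hB : IsUnit B.det) :
    (fromBlocks A 0 0 B).adjugate =
      fromBlocks (B.det • A.adjugate) 0 0 (A.det • B.adjugate) := by
  have hdet : (fromBlocks A 0 0 B).det = A.det * B.det := det_fromBlocks_zero₂₁ ..
  refine adjugate_eq_of_mul_eq_det_smul_one (hdet ▸ hA.mul hB) ?_
  simp [fromBlocks_multiply, mul_adjugate, smul_smul, hdet, ← fromBlocks_one, fromBlocks_smul,
    mul_comm]

theorem det_add_vecMulVec_eq_det_add_dotProduct {A : Matrix n n R} (hA : IsUnit A.det)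
    (u v : n → R) : (A + vecMulVec u v).det = A.det + v ⬝ᵥ A.adjugate *ᵥ u := by
  have hentry : (1 + replicateRow Unit v * A⁻¹ * replicateCol Unit u).det =
      1 + Ring.inverse A.det * v ⬝ᵥ A.adjugate *ᵥ u := by
    rw [det_unique, Matrix.mul_assoc, inv_def]
    simp [mul_apply, dotProduct, mulVec, Finset.mul_sum, mul_left_comm]
  rw [vecMulVec_eq Unit, det_add_replicateCol_mul_replicateRow hA, hentry, mul_add,
    mul_one, Ring.mul_inverse_cancel_left _ _ hA]

theorem det_smul_adjugate_add_vecMulVec {A : Matrix n n R} {u v : n → R} (hA : IsUnit A.det)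
    (hB : IsUnit (A + vecMulVec u v).det) :
    A.det • (A + vecMulVec u v).adjugate = (A + vecMulVec u v).det • A.adjugate -
      vecMulVec (A.adjugate *ᵥ u) (v ᵥ* A.adjugate) := by
  refine ((isUnit_iff_isUnit_det _).2 hB).mul_left_cancel ?_
  have h1 : (A + vecMulVec u v) * A.adjugate = A.det • 1 + vecMulVec u (v ᵥ* A.adjugate) := by
    rw [add_mul, mul_adjugate, vecMulVec_mul]
  have h2 : (A + vecMulVec u v) *ᵥ (A.adjugate *ᵥ u) = (A + vecMulVec u v).det • u := by
    rw [mulVec_mulVec, h1, det_add_vecMulVec_eq_det_add_dotProduct hA]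
    simp [add_mulVec, smul_mulVec, vecMulVec_mulVec, add_smul, dotProduct_mulVec]
  rw [mul_sub, mul_smul_comm, mul_smul_comm, h1, mul_adjugate, mul_vecMulVec, h2, smul_vecMulVec,
    smul_add, add_sub_cancel_right, smul_comm]

end Matrix

section Laplacian

variable {V W R : Type*} [Fintype V] [DecidableEq V] [Fintype W] [DecidableEq W]

theorem lapMatrix_sup_of_disjoint [AddCommGroupWithOne R] {G H : SimpleGraph V}
    [DecidableRel G.Adj] [DecidableRel H.Adj] (h : Disjoint G H) :
    (G ⊔ H).lapMatrix R = G.lapMatrix R + H.lapMatrix R := by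
  have hdegree (i : V) : (G ⊔ H).degree i = G.degree i + H.degree i := by
    simp only [← card_neighborFinset_eq_degree, neighborFinset_sup_of_disjoint i h,
      Finset.card_disjUnion]
  have hadj (i j : V) : ¬(G.Adj i j ∧ H.Adj i j) := fun hij ↦ h.le_bot ⟨hij.1, hij.2⟩
  have hadj' : (G ⊔ H).adjMatrix R = G.adjMatrix R + H.adjMatrix R := by
    ext i j
    by_cases hG : G.Adj i j <;> by_cases hH : H.Adj i j <;> simp_all [adjMatrix_apply]
  simp only [lapMatrix, degMatrix, hadj', hdegree, Nat.cast_add, ← diagonal_add]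
  abel

theorem lapMatrix_edge [Ring R] {u w : V} (h : u ≠ w) :
    (edge u w).lapMatrix R =
      vecMulVec (Pi.single u 1 - Pi.single w 1) (Pi.single u 1 - Pi.single w 1) := by
  have hadj (i j : V) : (edge u w).Adj i j ↔ i = u ∧ j = w ∨ i = w ∧ j = u := by grind
  have hdegree (i : V) : ((edge u w).degree i : R) = if i = u ∨ i = w then 1 else 0 := by
    rw [degree_eq_sum_if_adj]
    rcases eq_or_ne i u with rfl | hiu
    · simp [hadj, h]
    · simp [hadj, hiu, ite_and]
  ext i j
  simp only [lapMatrix, degMatrix, Matrix.sub_apply, diagonal_apply, hdegree, adjMatrix_apply,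
    hadj, vecMulVec_apply, Pi.sub_apply, Pi.single_apply]
  rcases eq_or_ne i j with rfl | hij
  · by_cases i = u <;> by_cases i = w <;> simp_all
  · by_cases i = u <;> by_cases i = w <;> by_cases j = u <;> by_cases j = w <;> simp_all

theorem lapMatrix_sum [AddCommGroupWithOne R] (G : SimpleGraph V) (H : SimpleGraph W)
    [DecidableRel G.Adj] [DecidableRel H.Adj] [DecidableRel (G ⊕g H).Adj] :
    (G ⊕g H).lapMatrix R = fromBlocks (G.lapMatrix R) 0 0 (H.lapMatrix R) := by
  ext (i | i) (j | j) <;>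
    simp [lapMatrix, degMatrix, diagonal_apply, adjMatrix_apply, degree_eq_sum_if_adj,
      -Finset.sum_boole]

end Laplacian

section ShiftedLaplacian

variable {V W R : Type*} [Fintype V] [DecidableEq V] [Fintype W] [DecidableEq W] [CommRing R]

open Classical in
/-- The shifted Laplacian `L(G) + x I`. Decidability of adjacency is chosen classically so that
the matrix depends only on the graph. -/
noncomputable def shiftedLapMatrix (G : SimpleGraph V) (x : R) : Matrix V V R :=
  G.lapMatrix R + x • 1

theorem shiftedLapMatrix_eq (G : SimpleGraph V) [DecidableRel G.Adj] (x : R) :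
    shiftedLapMatrix G x = G.lapMatrix R + x • 1 := by
  rw [shiftedLapMatrix]
  congr!

theorem isSymm_shiftedLapMatrix (G : SimpleGraph V) (x : R) : (shiftedLapMatrix G x).IsSymm := by
  classical
  exact (G.isSymm_lapMatrix R).add (isSymm_one.smul x)

theorem shiftedLapMatrix_submatrix_iso {G : SimpleGraph V} {H : SimpleGraph W} (e : G ≃g H)
    (x : R) :
    (shiftedLapMatrix H x).submatrix e.toEquiv e.toEquiv = shiftedLapMatrix G x := by
  classical
  ext i j
  simp [shiftedLapMatrix, lapMatrix, degMatrix, diagonal_apply, one_apply, e.map_adj_iff,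
    adjMatrix_apply]

theorem det_shiftedLapMatrix_eq_of_iso {G : SimpleGraph V} {H : SimpleGraph W} (e : G ≃g H)
    (x : R) : (shiftedLapMatrix G x).det = (shiftedLapMatrix H x).det := by
  rw [← shiftedLapMatrix_submatrix_iso e, det_submatrix_equiv_self]

theorem adjugate_shiftedLapMatrix_eq_of_iso {G : SimpleGraph V} {H : SimpleGraph W} (e : G ≃g H)
    (x : R) (i j : V) :
    (shiftedLapMatrix G x).adjugate i j = (shiftedLapMatrix H x).adjugate (e i) (e j) := by
  rw [← shiftedLapMatrix_submatrix_iso e, adjugate_submatrix_equiv_self]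
  rfl

theorem det_shiftedLapMatrix_of_unique [Unique V] (G : SimpleGraph V) (x : R) :
    (shiftedLapMatrix G x).det = x := by
  classical
  simp [shiftedLapMatrix, lapMatrix, degMatrix, Subsingleton.elim G ⊥]

theorem shiftedLapMatrix_sum (G : SimpleGraph V) (H : SimpleGraph W) (x : R) :
    shiftedLapMatrix (G ⊕g H) x =
      fromBlocks (shiftedLapMatrix G x) 0 0 (shiftedLapMatrix H x) := by
  classical
  simp only [shiftedLapMatrix, lapMatrix_sum, ← fromBlocks_one, fromBlocks_smul, fromBlocks_add,
    smul_zero, add_zero]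

theorem shiftedLapMatrix_sup_edge {G : SimpleGraph V} {u w : V} (hne : u ≠ w)
    (hadj : ¬G.Adj u w) (x : R) :
    shiftedLapMatrix (G ⊔ edge u w) x = shiftedLapMatrix G x +
      vecMulVec (Pi.single u 1 - Pi.single w 1) (Pi.single u 1 - Pi.single w 1) := by
  classical
  rw [shiftedLapMatrix_eq, shiftedLapMatrix_eq,
    lapMatrix_sup_of_disjoint ((disjoint_edge G).2 hadj), lapMatrix_edge hne, add_right_comm]

theorem adjugate_shiftedLapMatrix_comm (G : SimpleGraph V) (x : R) (i j : V) :
    (shiftedLapMatrix G x).adjugate i j = (shiftedLapMatrix G x).adjugate j i :=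
  (isSymm_shiftedLapMatrix G x).adjugate.apply j i

end ShiftedLaplacian

section Positive

variable {V W : Type*} [Fintype V] [DecidableEq V] [Fintype W] [DecidableEq W]
  {G : SimpleGraph V} {H : SimpleGraph W} {x : ℝ}

theorem posDef_shiftedLapMatrix (G : SimpleGraph V) (hx : 0 < x) :
    (shiftedLapMatrix G x).PosDef := by
  classical
  exact PosDef.posSemidef_add (posSemidef_lapMatrix ℝ G) (PosDef.one.smul hx)

theorem det_shiftedLapMatrix_pos (G : SimpleGraph V) (hx : 0 < x) :
    0 < (shiftedLapMatrix G x).det :=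
  (posDef_shiftedLapMatrix G hx).det_pos

theorem isUnit_det_shiftedLapMatrix (G : SimpleGraph V) (hx : 0 < x) :
    IsUnit (shiftedLapMatrix G x).det :=
  (det_shiftedLapMatrix_pos G hx).ne'.isUnit

theorem det_shiftedLapMatrix_sup_edge {u w : V} (hne : u ≠ w) (hadj : ¬G.Adj u w) (hx : 0 < x) :
    (shiftedLapMatrix (G ⊔ edge u w) x).det = (shiftedLapMatrix G x).det +
      (shiftedLapMatrix G x).adjugate u u + (shiftedLapMatrix G x).adjugate w w -
      2 * (shiftedLapMatrix G x).adjugate u w := by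
  rw [shiftedLapMatrix_sup_edge hne hadj,
    det_add_vecMulVec_eq_det_add_dotProduct (isUnit_det_shiftedLapMatrix G hx)]
  simp only [mulVec_sub, mulVec_single_one, sub_dotProduct, single_dotProduct, Pi.sub_apply,
    col_apply, one_mul, adjugate_shiftedLapMatrix_comm G x w u]
  ring

theorem adjugate_shiftedLapMatrix_sum (G : SimpleGraph V) (H : SimpleGraph W) (hx : 0 < x) :
    (shiftedLapMatrix (G ⊕g H) x).adjugate =
      fromBlocks ((shiftedLapMatrix H x).det • (shiftedLapMatrix G x).adjugate) 0 0
        ((shiftedLapMatrix G x).det • (shiftedLapMatrix H x).adjugate) := by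
  rw [shiftedLapMatrix_sum, adjugate_fromBlocks_zero_zero (isUnit_det_shiftedLapMatrix G hx)
    (isUnit_det_shiftedLapMatrix H hx)]

theorem det_shiftedLapMatrix_sum_sup_edge (G : SimpleGraph V) (H : SimpleGraph W) (u : V) (w : W)
    (hx : 0 < x) :
    (shiftedLapMatrix ((G ⊕g H) ⊔ edge (.inl u) (.inr w)) x).det =
      (shiftedLapMatrix G x).det * (shiftedLapMatrix H x).det +
      (shiftedLapMatrix G x).adjugate u u * (shiftedLapMatrix H x).det +
      (shiftedLapMatrix G x).det * (shiftedLapMatrix H x).adjugate w w := by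
  rw [det_shiftedLapMatrix_sup_edge Sum.inl_ne_inr (by simp) hx,
    adjugate_shiftedLapMatrix_sum G H hx, shiftedLapMatrix_sum, det_fromBlocks_zero₂₁]
  simp only [fromBlocks_apply₁₁, fromBlocks_apply₁₂, fromBlocks_apply₂₂, Matrix.smul_apply,
    Matrix.zero_apply, smul_eq_mul, mul_zero, sub_zero]
  ring

theorem det_mul_adjugate_shiftedLapMatrix_sup_edge {u w : V} (hne : u ≠ w) (hadj : ¬G.Adj u w)
    (hx : 0 < x) (i j : V) :
    (shiftedLapMatrix G x).det * (shiftedLapMatrix (G ⊔ edge u w) x).adjugate i j =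
      (shiftedLapMatrix (G ⊔ edge u w) x).det * (shiftedLapMatrix G x).adjugate i j -
      ((shiftedLapMatrix G x).adjugate i u - (shiftedLapMatrix G x).adjugate i w) *
      ((shiftedLapMatrix G x).adjugate u j - (shiftedLapMatrix G x).adjugate w j) := by
  have hunit := isUnit_det_shiftedLapMatrix (G ⊔ edge u w) hx
  rw [shiftedLapMatrix_sup_edge hne hadj] at hunit ⊢
  have h := det_smul_adjugate_add_vecMulVec (isUnit_det_shiftedLapMatrix G hx) hunit
  simpa [mulVec_sub, sub_vecMul, vecMulVec_apply] using congrFun₂ h i j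

theorem adjugate_shiftedLapMatrix_sum_sup_edge_inl_inl (G : SimpleGraph V) (H : SimpleGraph W)
    (u i : V) (w : W) (hx : 0 < x) :
    (shiftedLapMatrix ((G ⊕g H) ⊔ edge (.inl u) (.inr w)) x).adjugate (.inl i) (.inl u) =
      (shiftedLapMatrix G x).adjugate i u *
        ((shiftedLapMatrix H x).det + (shiftedLapMatrix H x).adjugate w w) := by
  have h := det_mul_adjugate_shiftedLapMatrix_sup_edge (G := G ⊕g H) (u := .inl u) (w := .inr w)
    Sum.inl_ne_inr (by simp) hx (.inl i) (.inl u)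
  refine mul_left_cancel₀ (det_shiftedLapMatrix_pos (G ⊕g H) hx).ne' ?_
  rw [h, det_shiftedLapMatrix_sum_sup_edge G H u w hx, adjugate_shiftedLapMatrix_sum G H hx,
    shiftedLapMatrix_sum, det_fromBlocks_zero₂₁]
  simp only [fromBlocks_apply₁₁, fromBlocks_apply₁₂, fromBlocks_apply₂₁, Matrix.smul_apply,
    Matrix.zero_apply, smul_eq_mul, sub_zero]
  ring

theorem adjugate_shiftedLapMatrix_sum_sup_edge_inr_inl (G : SimpleGraph V) (H : SimpleGraph W)
    (u : V) (w j : W) (hx : 0 < x) :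
    (shiftedLapMatrix ((G ⊕g H) ⊔ edge (.inl u) (.inr w)) x).adjugate (.inr j) (.inl u) =
      (shiftedLapMatrix H x).adjugate j w * (shiftedLapMatrix G x).adjugate u u := by
  have h := det_mul_adjugate_shiftedLapMatrix_sup_edge (G := G ⊕g H) (u := .inl u) (w := .inr w)
    Sum.inl_ne_inr (by simp) hx (.inr j) (.inl u)
  refine mul_left_cancel₀ (det_shiftedLapMatrix_pos (G ⊕g H) hx).ne' ?_
  rw [h, adjugate_shiftedLapMatrix_sum G H hx, shiftedLapMatrix_sum, det_fromBlocks_zero₂₁]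
  simp only [fromBlocks_apply₁₁, fromBlocks_apply₂₁, fromBlocks_apply₂₂, Matrix.smul_apply,
    Matrix.zero_apply, smul_eq_mul, mul_zero, zero_sub, sub_zero]
  ring

end Positive

section PathPolynomials

variable {R : Type*} [CommSemiring R]

mutual

/-- The shifted Morgan–Voyce polynomials `p₀ = 0, p₁ = 1, p₂ = x + 2, …`, evaluated at `x`;
the determinant of `L(P_n) + x I` is `x p_n` for the path `P_n` with `n ≥ 1` vertices. -/
def pathPoly (x : R) : ℕ → R
  | 0 => 0
  | n + 1 => pathPoly x n + (pathCofactor x n + x * pathPoly x n)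

/-- The companions `r₀ = 1, r₁ = 1, r₂ = x + 1, …` of `pathPoly`, evaluated at `x`: the principal
cofactor of `L(P_n) + x I` at an end of the path `P_n` with `n ≥ 1` vertices is `r_n`. -/
def pathCofactor (x : R) : ℕ → R
  | 0 => 1
  | n + 1 => pathCofactor x n + x * pathPoly x n

end

theorem pathPoly_succ (x : R) (n : ℕ) :
    pathPoly x (n + 1) = pathPoly x n + pathCofactor x (n + 1) := by
  rw [pathPoly, pathCofactor]

theorem pathCofactor_succ (x : R) (n : ℕ) :
    pathCofactor x (n + 1) = pathCofactor x n + x * pathPoly x n := by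
  rw [pathCofactor]

theorem pathPoly_one (x : R) : pathPoly x 1 = 1 := by
  simp [pathPoly, pathCofactor]

theorem pathCofactor_one (x : R) : pathCofactor x 1 = 1 := by
  simp [pathPoly, pathCofactor]

theorem pathPoly_add_and_pathCofactor_add (x : R) (a b : ℕ) :
    pathPoly x (a + b) = x * pathPoly x a * pathPoly x b + pathCofactor x a * pathPoly x b +
        pathPoly x a * pathCofactor x b ∧
      pathCofactor x (a + b) =
        x * pathPoly x a * pathPoly x b + pathCofactor x a * pathCofactor x b := by
  induction b with
  | zero => simp [pathPoly, pathCofactor]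
  | succ b ih =>
    rw [← add_assoc]
    constructor
    · simp only [pathPoly_succ, pathCofactor_succ, ih.1, ih.2]
      ring
    · simp only [pathPoly_succ, pathCofactor_succ, ih.1, ih.2]
      ring

theorem pathPoly_nonneg_and_pathCofactor_nonneg [PartialOrder R] [IsOrderedRing R] {x : R}
    (hx : 0 ≤ x) (n : ℕ) : 0 ≤ pathPoly x n ∧ 0 ≤ pathCofactor x n := by
  induction n with
  | zero => simp [pathPoly, pathCofactor]
  | succ n ih =>
    have hr : 0 ≤ pathCofactor x (n + 1) :=
      pathCofactor_succ x n ▸ add_nonneg ih.2 (mul_nonneg hx ih.1)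
    exact ⟨pathPoly_succ x n ▸ add_nonneg ih.1 hr, hr⟩

theorem pathCofactor_succ_mul_succ_le [PartialOrder R] [IsOrderedRing R] {x : R} (hx : 0 ≤ x)
    (a b : ℕ) :
    pathCofactor x (a + 1) * pathCofactor x (b + 1) ≤ pathCofactor x (a + (b + 1)) := by
  obtain ⟨hpa, -⟩ := pathPoly_nonneg_and_pathCofactor_nonneg hx a
  obtain ⟨hpb, -⟩ := pathPoly_nonneg_and_pathCofactor_nonneg hx b
  have hrp : pathCofactor x (b + 1) ≤ pathPoly x (b + 1) :=
    pathPoly_succ x b ▸ le_add_of_nonneg_left hpb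
  calc
    pathCofactor x (a + 1) * pathCofactor x (b + 1)
      = x * pathPoly x a * pathCofactor x (b + 1) +
          pathCofactor x a * pathCofactor x (b + 1) := by rw [pathCofactor_succ x a]; ring
    _ ≤ x * pathPoly x a * pathPoly x (b + 1) +
          pathCofactor x a * pathCofactor x (b + 1) := by gcongr
    _ = pathCofactor x (a + (b + 1)) := (pathPoly_add_and_pathCofactor_add x a (b + 1)).2.symm

end PathPolynomials

section RootedTrees

theorem reachable_deleteEdges_or {V : Type*} {G : SimpleGraph V} {u w k : V}
    (h : G.Reachable u k) :
    (G.deleteEdges {s(u, w)}).Reachable u k ∨ (G.deleteEdges {s(u, w)}).Reachable w k := by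
  rw [reachable_iff_reflTransGen] at h
  induction h with
  | refl => exact .inl .rfl
  | @tail i j _ hij ih =>
    by_cases he : s(i, j) = s(u, w)
    · rcases Sym2.eq_iff.1 he with ⟨-, rfl⟩ | ⟨-, rfl⟩
      exacts [.inr .rfl, .inl .rfl]
    · have hij' : (G.deleteEdges {s(u, w)}).Adj i j := deleteEdges_adj.2 ⟨hij, he⟩
      exact ih.imp (·.trans hij'.reachable) (·.trans hij'.reachable)

theorem connected_induce_reachable {V : Type*} (G : SimpleGraph V) (u : V) :
    (G.induce {k | G.Reachable u k}).Connected := by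
  have h := (G.connectedComponentMk u).connected_toSimpleGraph
  have hs : (G.connectedComponentMk u : Set V) = {k | G.Reachable u k} := by
    ext k
    exact ConnectedComponent.eq.trans reachable_comm
  exact hs ▸ h

/-- Identifies a graph whose only edge between `s` and its complement is `uw` with the union of
the two induced subgraphs joined by an edge. -/
def inducedSumSupEdgeIso {V : Type*} {G : SimpleGraph V} {s : Set V} [DecidablePred (· ∈ s)]
    {u w : V} (hu : u ∈ s) (hw : w ∈ sᶜ) (hadj : G.Adj u w)
    (hcross : ∀ i ∈ s, ∀ j ∈ sᶜ, G.Adj i j → i = u ∧ j = w) :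
    ((G.induce s ⊕g G.induce sᶜ) ⊔ edge (.inl ⟨u, hu⟩) (.inr ⟨w, hw⟩) : SimpleGraph (s ⊕ ↥sᶜ)) ≃g
      G where
  toEquiv := Equiv.Set.sumCompl s
  map_rel_iff' := by
    have hcross' (i : s) (j : ↥sᶜ) : G.Adj i j ↔ i = ⟨u, hu⟩ ∧ j = ⟨w, hw⟩ := by
      refine ⟨fun h ↦ ?_, ?_⟩
      · simpa [Subtype.ext_iff] using hcross i i.2 j j.2 h
      · rintro ⟨rfl, rfl⟩
        exact hadj
    rintro (i | i) (j | j)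
    · simp [edge_adj]
    · simp [edge_adj, hcross']
    · simp [edge_adj, hcross', G.adj_comm i, and_comm]
    · simp [edge_adj]

theorem exists_isTree_induce_of_adj {V : Type*} {G : SimpleGraph V} (hG : G.IsTree) {u w : V}
    (huw : G.Adj u w) :
    ∃ s : Set V, u ∈ s ∧ w ∈ sᶜ ∧ (G.induce s).IsTree ∧ (G.induce sᶜ).IsTree ∧
      ∀ i ∈ s, ∀ j ∈ sᶜ, G.Adj i j → i = u ∧ j = w := by
  set G' := G.deleteEdges {s(u, w)}
  have hbridge : ¬G'.Reachable u w :=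
    isBridge_iff.1 (isAcyclic_iff_forall_adj_isBridge.1 hG.isAcyclic huw)
  have hcompl : {k | G'.Reachable u k}ᶜ = {k | G'.Reachable w k} := by
    ext k
    refine ⟨(reachable_deleteEdges_or (hG.connected.preconnected u k)).resolve_left, ?_⟩
    exact fun hwk huk ↦ hbridge (huk.trans hwk.symm)
  have htree (a : V) : (G.induce {k | G'.Reachable a k}).IsTree :=
    ⟨(connected_induce_reachable G' a).mono fun i j h ↦ (deleteEdges_le {s(u, w)} h : G.Adj i j),
      hG.isAcyclic.induce _⟩
  refine ⟨{k | G'.Reachable u k}, .rfl, hbridge, htree u, hcompl ▸ htree w, ?_⟩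
  intro i hi j hj hij
  by_cases he : s(i, j) = s(u, w)
  · rcases Sym2.eq_iff.1 he with h | ⟨rfl, rfl⟩
    · exact h
    · exact absurd hi hbridge
  · exact absurd (hi.trans (deleteEdges_adj.2 ⟨hij, he⟩ : G'.Adj i j).reachable) hj

theorem isTree_rooted_induction
    {motive : ∀ {V : Type u} [Fintype V] [DecidableEq V], SimpleGraph V → V → Prop}
    (of_unique : ∀ {V : Type u} [Fintype V] [DecidableEq V] [Unique V] (G : SimpleGraph V) (u : V),
      motive G u)
    (of_iso : ∀ {V W : Type u} [Fintype V] [DecidableEq V] [Fintype W] [DecidableEq W]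
      {G : SimpleGraph V} {H : SimpleGraph W} (e : G ≃g H) (u : V), motive G u → motive H (e u))
    (join : ∀ {V W : Type u} [Fintype V] [DecidableEq V] [Fintype W] [DecidableEq W]
      (G : SimpleGraph V) (H : SimpleGraph W) (u : V) (w : W), motive G u → motive H w →
      motive ((G ⊕g H) ⊔ edge (.inl u) (.inr w)) (.inl u))
    {V : Type u} [Fintype V] [DecidableEq V] {G : SimpleGraph V} (hG : G.IsTree) (u : V) :
    motive G u := by
  classical
  induction hn : Fintype.card V using Nat.strong_induction_on generalizing V with
  | _ n ih =>
    subst hn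
    rcases subsingleton_or_nontrivial V with hV | hV
    · have : Unique V := ⟨⟨u⟩, fun v ↦ Subsingleton.elim v u⟩
      exact of_unique G u
    · obtain ⟨w, huw⟩ := hG.connected.preconnected.exists_adj_of_nontrivial u
      obtain ⟨s, hu, hw, hs, hs', hcross⟩ := exists_isTree_induce_of_adj hG huw
      have hGs := ih _ (Fintype.card_subtype_lt hw) hs ⟨u, hu⟩ rfl
      have hGs' := ih _ (Fintype.card_subtype_lt (not_not_intro hu)) hs' ⟨w, hw⟩ rfl
      exact of_iso (inducedSumSupEdgeIso hu hw huw hcross) (.inl ⟨u, hu⟩)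
        (join _ _ _ _ hGs hGs')

end RootedTrees

section TreeBound

variable {V W : Type*} [Fintype V] [DecidableEq V] [Fintype W] [DecidableEq W]
  {G : SimpleGraph V} {H : SimpleGraph W} {u : V} {w : W} {x : ℝ}

/-- The cofactors of the shifted Laplacian of the rooted graph `(G, u)` are extremal at the path
rooted at an end: the determinant and the principal cofactor at the root are at most those of the
path with as many vertices, and every cofactor in the root column is at least `1`, the cofactor
of the path at its two ends. -/
structure IsPathBounded (G : SimpleGraph V) (u : V) (x : ℝ) : Prop where
  det_le : (shiftedLapMatrix G x).det ≤ x * pathPoly x (Fintype.card V)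
  adjugate_self_le : (shiftedLapMatrix G x).adjugate u u ≤ pathCofactor x (Fintype.card V)
  one_le_adjugate (i : V) : 1 ≤ (shiftedLapMatrix G x).adjugate i u

theorem isPathBounded_of_unique [Unique V] (G : SimpleGraph V) (u : V) (x : ℝ) :
    IsPathBounded G u x where
  det_le := by rw [det_shiftedLapMatrix_of_unique, Fintype.card_unique, pathPoly_one, mul_one]
  adjugate_self_le := by simp [adjugate_subsingleton, pathCofactor_one]
  one_le_adjugate i := by simp [adjugate_subsingleton, Subsingleton.elim i u]

theorem IsPathBounded.of_iso (h : IsPathBounded G u x) (e : G ≃g H) :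
    IsPathBounded H (e u) x where
  det_le := by
    rw [← det_shiftedLapMatrix_eq_of_iso e, ← e.card_eq]
    exact h.det_le
  adjugate_self_le := by
    rw [← adjugate_shiftedLapMatrix_eq_of_iso e, ← e.card_eq]
    exact h.adjugate_self_le
  one_le_adjugate i := by
    obtain ⟨i, rfl⟩ := e.surjective i
    rw [← adjugate_shiftedLapMatrix_eq_of_iso e]
    exact h.one_le_adjugate i

theorem IsPathBounded.det_sum_sup_edge_le (hG : IsPathBounded G u x) (hH : IsPathBounded H w x)
    (hx : 0 < x) :
    (shiftedLapMatrix ((G ⊕g H) ⊔ edge (.inl u) (.inr w)) x).det ≤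
      x * pathPoly x (Fintype.card (V ⊕ W)) := by
  set a := Fintype.card V
  set b := Fintype.card W
  obtain ⟨hp, hr⟩ := pathPoly_nonneg_and_pathCofactor_nonneg hx.le a
  have hdH := det_shiftedLapMatrix_pos H hx
  have haH := hH.one_le_adjugate w
  calc
    _ = (shiftedLapMatrix G x).det * (shiftedLapMatrix H x).det +
          (shiftedLapMatrix G x).adjugate u u * (shiftedLapMatrix H x).det +
          (shiftedLapMatrix G x).det * (shiftedLapMatrix H x).adjugate w w :=
      det_shiftedLapMatrix_sum_sup_edge G H u w hx
    _ ≤ x * pathPoly x a * (x * pathPoly x b) + pathCofactor x a * (x * pathPoly x b) +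
          x * pathPoly x a * pathCofactor x b := by
      gcongr
      exacts [hG.det_le, hH.det_le, hG.adjugate_self_le, hH.det_le, hG.det_le, hH.adjugate_self_le]
    _ = x * pathPoly x (Fintype.card (V ⊕ W)) := by
      rw [Fintype.card_sum, (pathPoly_add_and_pathCofactor_add x a b).1]
      ring

theorem IsPathBounded.adjugate_sum_sup_edge_le (hG : IsPathBounded G u x)
    (hH : IsPathBounded H w x) (hx : 0 < x) :
    (shiftedLapMatrix ((G ⊕g H) ⊔ edge (.inl u) (.inr w)) x).adjugate (.inl u) (.inl u) ≤
      pathCofactor x (Fintype.card (V ⊕ W)) := by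
  set b := Fintype.card W
  obtain ⟨a, ha⟩ := Nat.exists_eq_add_one.2 (Fintype.card_pos_iff.2 ⟨u⟩ : 0 < Fintype.card V)
  have hr := (pathPoly_nonneg_and_pathCofactor_nonneg hx.le (a + 1)).2
  have hdH := det_shiftedLapMatrix_pos H hx
  have haH := hH.one_le_adjugate w
  calc
    _ = (shiftedLapMatrix G x).adjugate u u *
          ((shiftedLapMatrix H x).det + (shiftedLapMatrix H x).adjugate w w) :=
      adjugate_shiftedLapMatrix_sum_sup_edge_inl_inl G H u u w hx
    _ ≤ pathCofactor x (a + 1) * (x * pathPoly x b + pathCofactor x b) := by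
      gcongr
      exacts [ha ▸ hG.adjugate_self_le, hH.det_le, hH.adjugate_self_le]
    _ = pathCofactor x (a + 1) * pathCofactor x (b + 1) := by
      rw [pathCofactor_succ x b, add_comm (x * _)]
    _ ≤ pathCofactor x (a + (b + 1)) := pathCofactor_succ_mul_succ_le hx.le a b
    _ = pathCofactor x (Fintype.card (V ⊕ W)) := by
      rw [Fintype.card_sum, ha, add_right_comm, add_assoc]

theorem IsPathBounded.sum_sup_edge (hG : IsPathBounded G u x) (hH : IsPathBounded H w x)
    (hx : 0 < x) : IsPathBounded ((G ⊕g H) ⊔ edge (.inl u) (.inr w)) (.inl u) x where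
  det_le := hG.det_sum_sup_edge_le hH hx
  adjugate_self_le := hG.adjugate_sum_sup_edge_le hH hx
  one_le_adjugate
    | .inl i => by
      rw [adjugate_shiftedLapMatrix_sum_sup_edge_inl_inl G H u i w hx]
      exact one_le_mul_of_one_le_of_one_le (hG.one_le_adjugate i) <|
        le_add_of_nonneg_of_le (det_shiftedLapMatrix_pos H hx).le (hH.one_le_adjugate w)
    | .inr j => by
      rw [adjugate_shiftedLapMatrix_sum_sup_edge_inr_inl G H u w j hx]
      exact one_le_mul_of_one_le_of_one_le (hH.one_le_adjugate j) (hG.one_le_adjugate u)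

theorem isPathBounded_of_isTree (hG : G.IsTree) (u : V) (hx : 0 < x) : IsPathBounded G u x :=
  isTree_rooted_induction (motive := fun G u ↦ IsPathBounded G u x)
    (fun G u ↦ isPathBounded_of_unique G u x) (fun e _ h ↦ h.of_iso e)
    (fun _ _ _ _ hG hH ↦ hG.sum_sup_edge hH hx) hG u

end TreeBound

section Unicyclic

theorem exists_isTree_sup_edge_eq {V : Type*} [Finite V] {G : SimpleGraph V} (hG : G.Connected)
    (hcard : Nat.card G.edgeSet = Nat.card V) :
    ∃ (T : SimpleGraph V) (u w : V), T.IsTree ∧ u ≠ w ∧ ¬T.Adj u w ∧ T ⊔ edge u w = G := by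
  have hcyclic : ¬G.IsAcyclic := fun h ↦ by
    have := (isTree_iff_connected_and_card.1 ⟨hG, h⟩).2
    lia
  obtain ⟨u, w, hadj, hbridge⟩ : ∃ u w, G.Adj u w ∧ ¬G.IsBridge s(u, w) := by
    simpa [isAcyclic_iff_forall_adj_isBridge] using hcyclic
  have hT : Nat.card (G.deleteEdges {s(u, w)}).edgeSet + 1 = Nat.card V := by
    rw [edgeSet_deleteEdges, ← hcard]
    exact Set.ncard_sdiff_singleton_add_one (s := G.edgeSet) hadj
  refine ⟨G.deleteEdges {s(u, w)}, u, w, isTree_iff_connected_and_card.2 ⟨?_, hT⟩, hadj.ne,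
    by simp, ?_⟩
  · exact hG.connected_delete_edge_of_not_isBridge hbridge
  · exact sdiff_sup_cancel ((edge_le_iff G).2 (.inr hadj))

variable {V : Type*} [Fintype V] [DecidableEq V] {G : SimpleGraph V} {x : ℝ}

theorem det_shiftedLapMatrix_sup_edge_le_of_isTree (hG : G.IsTree) {u w : V} (hne : u ≠ w)
    (hadj : ¬G.Adj u w) (hx : 0 < x) :
    (shiftedLapMatrix (G ⊔ edge u w) x).det ≤
      x * pathPoly x (Fintype.card V) + 2 * pathCofactor x (Fintype.card V) - 2 := by
  have hu := isPathBounded_of_isTree hG u hx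
  have hw := isPathBounded_of_isTree hG w hx
  rw [det_shiftedLapMatrix_sup_edge hne hadj hx]
  linarith [hu.det_le, hu.adjugate_self_le, hw.adjugate_self_le, hw.one_le_adjugate u]

end Unicyclic

section PathAndCycle

variable {x : ℝ}

/-- The path obtained by joining a new vertex to an end of a path. -/
def pathGraphSumSupEdgeIso (n : ℕ) :
    ((pathGraph 1 ⊕g pathGraph (n + 1)) ⊔ edge (.inl 0) (.inr 0) :
      SimpleGraph (Fin 1 ⊕ Fin (n + 1))) ≃g pathGraph (n + 2) where
  toEquiv := finSumFinEquiv.trans (finCongr (by lia))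
  map_rel_iff' := by
    rintro (i | i) (j | j)
    · simp [edge_adj, pathGraph_adj]
    · simpa [edge_adj, pathGraph_adj] using fun _ ↦ Subsingleton.elim i 0
    · simpa [edge_adj, pathGraph_adj] using fun _ ↦ Subsingleton.elim j 0
    · simp [edge_adj, pathGraph_adj]

theorem det_and_adjugate_shiftedLapMatrix_pathGraph (hx : 0 < x) (n : ℕ) :
    (shiftedLapMatrix (pathGraph (n + 1)) x).det = x * pathPoly x (n + 1) ∧
      (shiftedLapMatrix (pathGraph (n + 1)) x).adjugate 0 0 = pathCofactor x (n + 1) ∧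
      (shiftedLapMatrix (pathGraph (n + 1)) x).adjugate (Fin.last n) 0 = 1 := by
  induction n with
  | zero =>
    refine ⟨?_, ?_, ?_⟩
    · simpa [pathPoly_one] using det_shiftedLapMatrix_of_unique (pathGraph 1) x
    · simp [pathCofactor_one, adjugate_subsingleton]
    · simp [adjugate_subsingleton]
  | succ n ih =>
    obtain ⟨hdet, hroot, hends⟩ := ih
    have hdet₁ : (shiftedLapMatrix (pathGraph 1) x).det = x := det_shiftedLapMatrix_of_unique _ x
    have hroot₁ : (shiftedLapMatrix (pathGraph 1) x).adjugate 0 0 = 1 := by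
      simp [adjugate_subsingleton]
    have hfirst : pathGraphSumSupEdgeIso n (.inl 0) = 0 := rfl
    have hlast : pathGraphSumSupEdgeIso n (.inr (Fin.last n)) = Fin.last (n + 1) := by
      simp [pathGraphSumSupEdgeIso, Fin.ext_iff, add_comm]
    refine ⟨?_, ?_, ?_⟩
    · rw [← det_shiftedLapMatrix_eq_of_iso (pathGraphSumSupEdgeIso n),
        det_shiftedLapMatrix_sum_sup_edge _ _ _ _ hx, hdet₁, hroot₁, hdet, hroot,
        pathPoly_succ x (n + 1), pathCofactor_succ x (n + 1)]
      ring
    · rw [← hfirst, ← adjugate_shiftedLapMatrix_eq_of_iso,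
        adjugate_shiftedLapMatrix_sum_sup_edge_inl_inl _ _ _ _ _ hx, hroot₁, hdet, hroot, one_mul,
        add_comm, ← pathCofactor_succ]
    · rw [← hfirst, ← hlast, ← adjugate_shiftedLapMatrix_eq_of_iso,
        adjugate_shiftedLapMatrix_sum_sup_edge_inr_inl _ _ _ _ _ hx, hroot₁, hends, mul_one]

/-- The reversal of a path, exchanging its two ends. -/
def pathGraphRevIso (n : ℕ) : pathGraph n ≃g pathGraph n where
  toEquiv := Fin.revPerm
  map_rel_iff' := by
    intro i j
    simp only [Fin.revPerm_apply, pathGraph_adj, Fin.val_rev]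
    lia

theorem cycleGraph_eq_pathGraph_sup_edge (n : ℕ) :
    cycleGraph (n + 3) = pathGraph (n + 3) ⊔ edge (Fin.last (n + 2)) 0 := by
  ext i j
  rw [cycleGraph_adj']
  rcases lt_trichotomy i j with h | rfl | h
  · rw [Fin.coe_sub_iff_lt.2 h, Fin.coe_sub_iff_le.2 h.le]
    simp only [sup_adj, pathGraph_adj, edge_adj, Fin.ext_iff, Fin.val_last, Fin.val_zero]
    lia
  · simp
  · rw [Fin.coe_sub_iff_lt.2 h, Fin.coe_sub_iff_le.2 h.le]
    simp only [sup_adj, pathGraph_adj, edge_adj, Fin.ext_iff, Fin.val_last, Fin.val_zero]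
    lia

theorem det_shiftedLapMatrix_cycleGraph (hx : 0 < x) (n : ℕ) :
    (shiftedLapMatrix (cycleGraph (n + 3)) x).det =
      x * pathPoly x (n + 3) + 2 * pathCofactor x (n + 3) - 2 := by
  obtain ⟨hdet, hroot, hends⟩ := det_and_adjugate_shiftedLapMatrix_pathGraph hx (n + 2)
  have hlast : (shiftedLapMatrix (pathGraph (n + 3)) x).adjugate (Fin.last _) (Fin.last _) =
      pathCofactor x (n + 3) := by
    rw [adjugate_shiftedLapMatrix_eq_of_iso (pathGraphRevIso (n + 3)), ← hroot]
    simp [pathGraphRevIso]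
  rw [cycleGraph_eq_pathGraph_sup_edge,
    det_shiftedLapMatrix_sup_edge (Fin.last_pos.ne') (by simp [pathGraph_adj]) hx, hdet, hroot,
    hends, hlast]
  ring

end PathAndCycle

theorem three_le_card_of_card_edgeFinset_eq {V : Type*} [Fintype V] [Nonempty V]
    {G : SimpleGraph V} [DecidableRel G.Adj] (hG : G.edgeFinset.card = Fintype.card V) :
    3 ≤ Fintype.card V := by
  have hpos : 0 < Fintype.card V := Fintype.card_pos
  have hle : Fintype.card V ≤ (Fintype.card V).choose 2 := hG ▸ G.card_edgeFinset_le_card_choose_two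
  by_contra! hlt
  interval_cases Fintype.card V <;> simp at hle

theorem stmt_9_general {V : Type*} [Fintype V] [DecidableEq V] (G : SimpleGraph V)
    [DecidableRel G.Adj] (hconn : G.Connected) {v : ℕ} (hv : Fintype.card V = v)
    (hedges : G.edgeFinset.card = v) {x : ℝ} (hx : 0 ≤ x) :
    (G.lapMatrix ℝ + x • 1).det ≤ ((cycleGraph v).lapMatrix ℝ + x • 1).det := by
  subst hv
  have := hconn.nonempty
  obtain ⟨n, hn⟩ := Nat.exists_eq_add_of_le' (three_le_card_of_card_edgeFinset_eq hedges)
  rcases hx.eq_or_lt with rfl | hx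
  · simp [det_lapMatrix_eq_zero]
  have hcard : Nat.card G.edgeSet = Nat.card V := by
    rw [Nat.card_eq_fintype_card, Nat.card_eq_fintype_card, ← edgeFinset_card, hedges]
  obtain ⟨T, u, w, hT, hne, hadj, rfl⟩ := exists_isTree_sup_edge_eq hconn hcard
  rw [← shiftedLapMatrix_eq, ← shiftedLapMatrix_eq, hn, det_shiftedLapMatrix_cycleGraph hx, ← hn]
  exact det_shiftedLapMatrix_sup_edge_le_of_isTree hT hne hadj hx

theorem stmt_9 (v : ℕ) (hv : 3 ≤ v) (G : SimpleGraph (Fin v)) [DecidableRel G.Adj]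
    (hconn : G.Connected) (hedges : G.edgeFinset.card = v) :
    ∀ y : ℝ, 0 ≤ y →
      Matrix.det (G.lapMatrix ℝ + ((v : ℝ) * y) • (1 : Matrix (Fin v) (Fin v) ℝ)) ≤
      Matrix.det ((SimpleGraph.cycleGraph v).lapMatrix ℝ +
        ((v : ℝ) * y) • (1 : Matrix (Fin v) (Fin v) ℝ)) := by
  intro y hy
  exact stmt_9_general G hconn (Fintype.card_fin v) hedges (mul_nonneg v.cast_nonneg hy)
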